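/- (Decomposition of analz.) For every set G of messages, analz G = pparts G ∪ analz (kparts G). -/

import Mathlib

inductive agent : Type
  | Server : agent
  | Friend : ℕ → agent
  | Spy : agent
deriving DecidableEq

inductive msg : Type
  | Agent : agent → msg
  | Number : ℕ → msg
  | Nonce : ℕ → msg
  | Key : ℕ → msg
  | Hash : msg → msg
  | MPair : msg → msg → msg
  | Crypt : ℕ → msg → msg
deriving DecidableEq

inductive partsP (H : Set msg) : msg → Prop
  | Inj : ∀ X, X ∈ H → partsP H X
  | Fst : ∀ X Y, partsP H (msg.MPair X Y) → partsP H X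
  | Snd : ∀ X Y, partsP H (msg.MPair X Y) → partsP H Y
  | Body : ∀ K X, partsP H (msg.Crypt K X) → partsP H X

/-- `parts H`: sub-components of messages of `H`. -/
def parts (H : Set msg) : Set msg := {X | partsP H X}

inductive analzP (invKey : ℕ → ℕ) (H : Set msg) : msg → Prop
  | Inj : ∀ X, X ∈ H → analzP invKey H X
  | Fst : ∀ X Y, analzP invKey H (msg.MPair X Y) → analzP invKey H X
  | Snd : ∀ X Y, analzP invKey H (msg.MPair X Y) → analzP invKey H Y
  | Decrypt : ∀ K X, analzP invKey H (msg.Crypt K X) →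
      analzP invKey H (msg.Key (invKey K)) → analzP invKey H X

/-- `analz invKey H`: what can be obtained by decomposing and decrypting messages of `H`. -/
def analz (invKey : ℕ → ℕ) (H : Set msg) : Set msg := {X | analzP invKey H X}

inductive synthP (H : Set msg) : msg → Prop
  | Inj : ∀ X, X ∈ H → synthP H X
  | Ag : ∀ a, synthP H (msg.Agent a)
  | Num : ∀ n, synthP H (msg.Number n)
  | Hsh : ∀ X, synthP H X → synthP H (msg.Hash X)
  | Pr : ∀ X Y, synthP H X → synthP H Y → synthP H (msg.MPair X Y)
  | Cry : ∀ K X, synthP H X → msg.Key K ∈ H → synthP H (msg.Crypt K X)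

/-- `synth H`: messages that can be synthesized from `H`. -/
def synth (H : Set msg) : Set msg := {X | synthP H X}

inductive guardP (invKey : ℕ → ℕ) (n : ℕ) (Ks : Set ℕ) : msg → Prop
  | No_Nonce : ∀ X, msg.Nonce n ∉ parts {X} → guardP invKey n Ks X
  | Guard : ∀ K X, invKey K ∈ Ks → guardP invKey n Ks (msg.Crypt K X)
  | Cry : ∀ K X, guardP invKey n Ks X → guardP invKey n Ks (msg.Crypt K X)
  | Pr : ∀ X Y, guardP invKey n Ks X → guardP invKey n Ks Y →
      guardP invKey n Ks (msg.MPair X Y)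

/-- `guard n Ks`: messages in which `Nonce n` is guarded by the keys of `Ks`. -/
def guardMsg (invKey : ℕ → ℕ) (n : ℕ) (Ks : Set ℕ) : Set msg := {X | guardP invKey n Ks X}

/-- `Guard n Ks H`: every message of `H` lies in `guard n Ks`. -/
def Guard (invKey : ℕ → ℕ) (n : ℕ) (Ks : Set ℕ) (H : Set msg) : Prop :=
  ∀ X ∈ H, X ∈ guardMsg invKey n Ks

/-- A message is a pair if it is of the form `⟨X,Y⟩`. -/
def isPair : msg → Prop
  | msg.MPair _ _ => True
  | _ => False

inductive ppartsP (H : Set msg) : msg → Prop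
  | Inj : ∀ X Y, msg.MPair X Y ∈ H → ppartsP H (msg.MPair X Y)
  | Fst : ∀ X Y, ppartsP H (msg.MPair X Y) → isPair X → ppartsP H X
  | Snd : ∀ X Y, ppartsP H (msg.MPair X Y) → isPair Y → ppartsP H Y

/-- `pparts H`: the pairs of `H`, their components that are pairs, and so on. -/
def pparts (H : Set msg) : Set msg := {X | ppartsP H X}

/-- `kparts H`: the non-pair elements of `H` together with the non-pair
components of the pairs of `pparts H`. -/
def kparts (H : Set msg) : Set msg :=
  {X | ¬ isPair X ∧ (X ∈ H ∨ (∃ Y, msg.MPair X Y ∈ pparts H) ∨ (∃ Y, msg.MPair Y X ∈ pparts H))}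

theorem pparts_isPair_aux {G : Set msg} {X : msg} (h : ppartsP G X) : isPair X := by
  cases h with
  | Inj X Y h => trivial
  | Fst _ Y h hp => exact hp
  | Snd _ Y h hp => exact hp

theorem pparts_analz_aux (invKey : ℕ → ℕ) {G : Set msg} {X : msg} (h : ppartsP G X) :
    analzP invKey G X := by
  induction h with
  | Inj X Y h => exact .Inj _ h
  | Fst X Y h hp ih => exact .Fst _ _ ih
  | Snd X Y h hp ih => exact .Snd _ _ ih

/-- Decomposition of `analz`. -/
theorem analz_decomp (invKey : ℕ → ℕ) (hinv : ∀ K, invKey (invKey K) = K)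
    (G : Set msg) :
    analz invKey G = pparts G ∪ analz invKey (kparts G) := by
  ext X
  constructor
  · intro h
    change analzP invKey G X at h
    change ppartsP G X ∨ analzP invKey (kparts G) X
    induction h with
    | Inj X h =>
      by_cases hp : isPair X
      · cases X <;> first | exact hp.elim | exact Or.inl (.Inj _ _ h)
      · exact Or.inr (.Inj _ ⟨hp, Or.inl h⟩)
    | Fst X Y h ih =>
      rcases ih with ih | ih
      · by_cases hp : isPair X
        · exact Or.inl (.Fst _ _ ih hp)
        · exact Or.inr (.Inj _ ⟨hp, Or.inr (Or.inl ⟨Y, ih⟩)⟩)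
      · exact Or.inr (.Fst _ _ ih)
    | Snd X Y h ih =>
      rcases ih with ih | ih
      · by_cases hp : isPair Y
        · exact Or.inl (.Snd _ _ ih hp)
        · exact Or.inr (.Inj _ ⟨hp, Or.inr (Or.inr ⟨X, ih⟩)⟩)
      · exact Or.inr (.Snd _ _ ih)
    | Decrypt K X h1 h2 ih1 ih2 =>
      rcases ih1 with ih1 | ih1
      · exact (pparts_isPair_aux ih1).elim
      rcases ih2 with ih2 | ih2
      · exact (pparts_isPair_aux ih2).elim
      exact Or.inr (.Decrypt _ _ ih1 ih2)
  · rintro (h | h)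
    · exact pparts_analz_aux invKey h
    · change analzP invKey (kparts G) X at h
      change analzP invKey G X
      induction h with
      | Inj X h =>
        obtain ⟨_, h | ⟨Y, h⟩ | ⟨Y, h⟩⟩ := h
        · exact .Inj _ h
        · exact .Fst _ _ (pparts_analz_aux invKey h)
        · exact .Snd _ _ (pparts_analz_aux invKey h)
      | Fst X Y h ih => exact .Fst _ _ ih
      | Snd X Y h ih => exact .Snd _ _ ih
      | Decrypt K X h1 h2 ih1 ih2 => exact .Decrypt _ _ ih1 ih2
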